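/- arXiv:2003.12661 — 2 statements merged into one kernel-verified Lean document; each statement's English description precedes it below -/
import Mathlib

section
/- There exists a permutation σ of size k! + k − 1 such that cocc(π, σ) = 1 for every π ∈ S_k (a minimal superpermutation for consecutive patterns). -/
open Filter Finset

/-- The value of the permutation `σ` at a natural-number index (junk value `0` out of range). -/
def papp {n : ℕ} (σ : Equiv.Perm (Fin n)) (j : ℕ) : ℕ :=
  if h : j < n then (σ ⟨j, h⟩ : ℕ) else 0

/-- The number of consecutive occurrences of the pattern `π` in `σ`:
the number of intervals `i, i+1, …, i+k-1` of indices such that `σ` restricted to them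
is in the same relative order as `π`. -/
def cocc {k n : ℕ} (π : Equiv.Perm (Fin k)) (σ : Equiv.Perm (Fin n)) : ℕ :=
  ((Finset.range (n + 1 - k)).filter
    (fun i => ∀ a b : Fin k, π a < π b ↔ papp σ (i + (a : ℕ)) < papp σ (i + (b : ℕ)))).card

/-- The direct sum `τ ⊕ σ` of two permutations: `τ(1)…τ(m)(σ(1)+m)…(σ(n)+m)`. -/
def dsum {m n : ℕ} (τ : Equiv.Perm (Fin m)) (σ : Equiv.Perm (Fin n)) :
    Equiv.Perm (Fin (m + n)) :=
  finSumFinEquiv.permCongr (Equiv.sumCongr τ σ)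

namespace SuperPerm

/-- Every injective finite sequence has a pattern. -/
lemma exists_pattern {n : ℕ} {α : Type*} [LinearOrder α] (g : Fin n → α)
    (hg : Function.Injective g) :
    ∃ p : Equiv.Perm (Fin n), ∀ a b, p a < p b ↔ g a < g b := by
  have hm : StrictMono (g ∘ Tuple.sort g) :=
    (Tuple.monotone_sort g).strictMono_of_injective (hg.comp (Tuple.sort g).injective)
  refine ⟨(Tuple.sort g)⁻¹, fun a b => ?_⟩
  rw [← hm.lt_iff_lt]
  simp

lemma pattern_unique {n : ℕ} (p q : Equiv.Perm (Fin n))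
    (h : ∀ a b, p a < p b ↔ q a < q b) : p = q := by
  have hm : StrictMono (p * q⁻¹ : Equiv.Perm (Fin n)) := by
    intro a b hab
    simp only [Equiv.Perm.mul_apply]
    rw [h]
    simpa using hab
  have h1 : ∀ x, (p * q⁻¹ : Equiv.Perm (Fin n)) x = x := by
    intro x
    have h2 := Subsingleton.elim (hm.orderIsoOfSurjective _ (Equiv.surjective _)) (OrderIso.refl _)
    exact congrArg (fun o : Fin n ≃o Fin n => o x) h2
  ext x
  have := h1 (q x)
  simp at this
  rw [this]

/-- Overlap relation. -/
def Ov {k : ℕ} (e e' : Equiv.Perm (Fin (k + 1))) : Prop :=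
  ∀ a b : Fin k, e a.succ < e b.succ ↔ e' a.castSucc < e' b.castSucc

lemma merge {E : Type*} [Fintype E] [DecidableEq E] (f : Equiv.Perm E) (e0 e e' : E)
    (he : f.SameCycle e0 e) (he' : ¬ f.SameCycle e0 e') :
    (∀ x, f.SameCycle e0 x → (f * Equiv.swap e e').SameCycle e0 x) ∧
      (f * Equiv.swap e e').SameCycle e0 e' := by
  set f' := f * Equiv.swap e e' with hf'
  have key : ∀ n : ℕ, ∀ x, f.SameCycle e0 x → (f ^ n) x = e → f'.SameCycle e x := by
    intro n
    induction n with
    | zero => intro x _ h; simp at h; subst h; exact Equiv.Perm.SameCycle.refl _ _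
    | succ n ih =>
      intro x hx h
      by_cases hxe : x = e
      · subst hxe; exact Equiv.Perm.SameCycle.refl _ _
      have hxe' : x ≠ e' := by rintro rfl; exact he' hx
      have h1 := ih (f x) (Equiv.Perm.sameCycle_apply_right.2 hx) (by
        rw [← h, pow_succ]; rfl)
      have h2 : f' x = f x := by
        simp [hf', Equiv.swap_apply_of_ne_of_ne hxe hxe']
      rw [← h2] at h1
      exact Equiv.Perm.sameCycle_apply_right.1 h1
  have key2 : ∀ x, f.SameCycle e0 x → f'.SameCycle e x := by
    intro x hx
    obtain ⟨n, -, hn⟩ := (hx.symm.trans he).exists_pow_eq'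
    exact key n x hx hn
  have h0 : f'.SameCycle e0 e := (key2 e0 (Equiv.Perm.SameCycle.refl _ _)).symm
  refine ⟨fun x hx => h0.trans (key2 x hx), ?_⟩
  have h3 := key2 (f e) (Equiv.Perm.sameCycle_apply_right.2 he)
  have h4 : f' e' = f e := by simp [hf']
  rw [← h4] at h3
  exact h0.trans (Equiv.Perm.sameCycle_apply_right.1 h3)

/-- Connectivity of the overlap graph. -/
lemma connected {k : ℕ} (C : Set (Equiv.Perm (Fin (k + 1))))
    (hC : ∀ e e', e ∈ C → Ov e e' → e' ∈ C) (e0 r : Equiv.Perm (Fin (k + 1)))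
    (h0 : e0 ∈ C) : r ∈ C := by
  let s : ℕ → ℕ := fun j => if h : j < k + 1 then (e0 ⟨j, h⟩ : ℕ) else
    if h : j - (k + 1) < k + 1 then k + 1 + (r ⟨j - (k + 1), h⟩ : ℕ) else j
  have hs : Function.Injective s := by
    intro i j hij
    simp only [s] at hij
    split_ifs at hij with h1 h2 h3 h4 h5 h6 h7
    · have := e0.injective (Fin.ext hij); simpa using this
    · omega
    · omega
    · omega
    · have := r.injective (Fin.ext (Nat.add_left_cancel hij)); simp at this; omega
    all_goals omega
  have main : ∀ i : ℕ, ∀ p : Equiv.Perm (Fin (k + 1)),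
      (∀ a b : Fin (k + 1), p a < p b ↔ s (i + a) < s (i + b)) → p ∈ C := by
    intro i
    induction i with
    | zero =>
      intro p hp
      have : p = e0 := pattern_unique _ _ (fun a b => by
        rw [hp]; simp [s, Nat.le_of_lt_succ a.2, Nat.le_of_lt_succ b.2])
      rwa [this]
    | succ i ih =>
      intro p hp
      obtain ⟨q, hq⟩ := exists_pattern (fun a : Fin (k + 1) => s (i + a)) (by
        intro a b hab
        have := hs hab
        exact Fin.ext (by omega))
      refine hC q p (ih q hq) ?_
      intro a b
      rw [hq, hp]
      simp only [Fin.val_succ, Fin.val_castSucc]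
      rw [show i + (a + 1 : ℕ) = i + 1 + a by ring, show i + (b + 1 : ℕ) = i + 1 + b by ring]
  refine main (k + 1) r fun a b => ?_
  have h1 : ∀ a : Fin (k + 1), ¬ (k + 1 + (a : ℕ) ≤ k) := fun a => by omega
  have h2 : ∀ a : Fin (k + 1), k + 1 + (a : ℕ) ≤ k + (k + 1) := fun a => by omega
  simp [s, h1, h2]

lemma exists_euler (k : ℕ) : ∃ f : Equiv.Perm (Equiv.Perm (Fin (k + 1))),
    (∀ e, Ov e (f e)) ∧ ∀ x, f.SameCycle 1 x := by
  classical
  let S : Finset (Equiv.Perm (Equiv.Perm (Fin (k + 1)))) := univ.filter fun f => ∀ e, Ov e (f e)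
  have hS : S.Nonempty := by
    refine ⟨Equiv.mulRight (finRotate (k + 1)), ?_⟩
    simp only [S, mem_filter, mem_univ, true_and]
    intro e a b
    simp
  obtain ⟨f, hf, hmax⟩ := S.exists_max_image
    (fun f => (univ.filter fun x => f.SameCycle 1 x).card) hS
  simp only [S, mem_filter, mem_univ, true_and] at hf
  refine ⟨f, hf, fun x => ?_⟩
  refine connected {x | f.SameCycle 1 x} ?_ 1 x (Equiv.Perm.SameCycle.refl _ _)
  intro e e'' he hov
  by_contra hne
  set e' := f⁻¹ e'' with he'
  have hfe' : f e' = e'' := by simp [he']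
  have hne' : ¬ f.SameCycle 1 e' := by
    intro h
    apply hne
    have := Equiv.Perm.sameCycle_apply_right.2 h
    rw [hfe'] at this
    exact this
  obtain ⟨m1, m2⟩ := merge f 1 e e' he hne'
  have hmem : f * Equiv.swap e e' ∈ S := by
    simp only [S, mem_filter, mem_univ, true_and]
    intro x
    by_cases h1 : x = e
    · subst h1; simpa [hfe'] using hov
    by_cases h2 : x = e'
    · rw [h2]
      intro a b
      have q1 := hf e' a b
      rw [hfe'] at q1
      have q2 := hov a b
      have q3 := hf e a b
      simp only [Equiv.Perm.mul_apply, Equiv.swap_apply_right]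
      tauto
    · simpa [Equiv.swap_apply_of_ne_of_ne h1 h2] using hf x
  have := hmax _ hmem
  refine absurd this (not_le.2 (Finset.card_lt_card ?_))
  refine (Finset.ssubset_iff_of_subset ?_).2 ⟨e', by simpa using m2, by simpa using hne'⟩
  intro y hy
  simp only [mem_filter, mem_univ, true_and] at hy ⊢
  exact m1 y hy

/-- Any walk in the overlap graph is realized by an injective sequence. -/
lemma realize {k : ℕ} (e : ℕ → Equiv.Perm (Fin (k + 1))) (he : ∀ i, Ov (e i) (e (i + 1)))
    (n : ℕ) : ∃ s : ℕ → ℚ, (∀ i j, i < n + k + 1 → j < n + k + 1 → s i = s j → i = j) ∧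
      ∀ i ≤ n, ∀ a b : Fin (k + 1), e i a < e i b ↔ s (i + a) < s (i + b) := by
  induction n with
  | zero =>
    refine ⟨fun j => if h : j < k + 1 then ((e 0 ⟨j, h⟩ : ℕ) : ℚ) else 0, ?_, ?_⟩
    · intro i j hi hj h
      have hi' : i < k + 1 := by omega
      have hj' : j < k + 1 := by omega
      simp only [hi', hj', dif_pos, Nat.cast_inj] at h
      simpa using (e 0).injective (Fin.ext h)
    · intro i hi a b
      obtain rfl : i = 0 := by omega
      simp [Nat.le_of_lt_succ a.2, Nat.le_of_lt_succ b.2]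
  | succ n ih =>
    obtain ⟨s, hinj, hs⟩ := ih
    classical
    let P : ℕ → Prop := fun j => ∃ a : Fin k,
      e (n + 1) a.castSucc < e (n + 1) (Fin.last k) ∧ s j ≤ s (n + 1 + a)
    obtain ⟨v, hv1, hv2⟩ := Order.exists_between_finsets
      (((range (n + k + 1)).filter P).image s)
      (((range (n + k + 1)).filter (fun j => ¬ P j)).image s) (by
        intro x hx y hy
        simp only [mem_image, mem_filter, mem_range] at hx hy
        obtain ⟨i, ⟨hi, a, ha, hia⟩, rfl⟩ := hx
        obtain ⟨j, ⟨hj, hP⟩, rfl⟩ := hy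
        by_contra hlt
        exact hP ⟨a, ha, (not_lt.1 hlt).trans hia⟩)
    have hlo : ∀ j, j < n + k + 1 → P j → s j < v := fun j hj hP =>
      hv1 _ (mem_image_of_mem _ (by simp [hj, hP]))
    have hhi : ∀ j, j < n + k + 1 → ¬ P j → v < s j := fun j hj hP =>
      hv2 _ (mem_image_of_mem _ (by simp [hj, hP]))
    have hne : ∀ j, j < n + k + 1 → s j ≠ v := by
      intro j hj
      by_cases hP : P j
      · exact (hlo j hj hP).ne
      · exact (hhi j hj hP).ne'
    have hcmp : ∀ a : Fin k, P (n + 1 + a) ↔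
        e (n + 1) a.castSucc < e (n + 1) (Fin.last k) := by
      intro a
      constructor
      · rintro ⟨b, hb, hab⟩
        by_contra hc
        have h1 : e (n + 1) b.castSucc < e (n + 1) a.castSucc := lt_of_lt_of_le hb (not_lt.1 hc)
        rw [← he n b a, hs n le_rfl] at h1
        simp only [Fin.val_succ] at h1
        rw [show n + (a + 1 : ℕ) = n + 1 + a by ring,
          show n + (b + 1 : ℕ) = n + 1 + b by ring] at h1
        exact absurd hab (not_le.2 h1)
      · intro h
        exact ⟨a, h, le_rfl⟩
    have hold : ∀ j, j < n + k + 1 → Function.update s (n + k + 1) v j = s j := fun j hj =>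
      Function.update_of_ne (by omega) _ _
    have hnew : Function.update s (n + k + 1) v (n + k + 1) = v := Function.update_self _ _ _
    refine ⟨Function.update s (n + k + 1) v, ?_, ?_⟩
    · intro i j hi hj h
      rcases Nat.lt_or_ge i (n + k + 1) with h1 | h1 <;>
        rcases Nat.lt_or_ge j (n + k + 1) with h2 | h2
      · rw [hold i h1, hold j h2] at h
        exact hinj i j h1 h2 h
      · obtain rfl : j = n + k + 1 := by omega
        rw [hold i h1, hnew] at h
        exact absurd h (hne i h1)
      · obtain rfl : i = n + k + 1 := by omega
        rw [hold j h2, hnew] at h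
        exact absurd h.symm (hne j h2)
      · omega
    · intro i hi a b
      rcases Nat.lt_or_ge n i with h1 | h1
      · obtain rfl : i = n + 1 := by omega
        have hl : n + 1 + k = n + k + 1 := by ring
        induction a using Fin.lastCases with
        | last =>
          induction b using Fin.lastCases with
          | last => simp
          | cast b =>
            simp only [Fin.val_last, Fin.val_castSucc]
            have hb : n + 1 + (b : ℕ) < n + k + 1 := by omega
            rw [hl, hnew, hold _ hb]
            constructor
            · intro h
              exact hhi _ hb (fun hP => lt_asymm h ((hcmp b).1 hP))
            · intro h
              have hP : ¬ P (n + 1 + b) := fun hP => lt_asymm h (hlo _ hb hP)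
              rw [hcmp] at hP
              refine lt_of_le_of_ne (not_lt.1 hP) fun heq => ?_
              have := (e (n + 1)).injective heq
              exact absurd this (Fin.castSucc_lt_last b).ne'
        | cast a =>
          have ha : n + 1 + (a : ℕ) < n + k + 1 := by omega
          induction b using Fin.lastCases with
          | last =>
            simp only [Fin.val_last, Fin.val_castSucc]
            rw [hl, hnew, hold _ ha, ← hcmp]
            constructor
            · exact hlo _ ha
            · intro h
              by_contra hP
              exact lt_asymm h (hhi _ ha hP)
          | cast b =>
            have hb : n + 1 + (b : ℕ) < n + k + 1 := by omega
            simp only [Fin.val_castSucc]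
            rw [hold _ ha, hold _ hb, ← he n a b, hs n le_rfl]
            simp only [Fin.val_succ]
            rw [show n + (a + 1 : ℕ) = n + 1 + a by ring,
              show n + (b + 1 : ℕ) = n + 1 + b by ring]
      · rw [hold _ (by omega), hold _ (by omega)]
        exact hs i h1 a b

end SuperPerm

open SuperPerm

/-- There is a "superpermutation" of minimal size for consecutive patterns: a permutation of
size `(k+1)! + (k+1) − 1` containing every pattern of size `k+1` exactly once as a
consecutive pattern. -/
theorem exists_superpermutation (k : ℕ) :
    ∃ σ : Equiv.Perm (Fin (Nat.factorial (k + 1) + k)),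
      ∀ π : Equiv.Perm (Fin (k + 1)), cocc π σ = 1 := by
  classical
  obtain ⟨f, hf, hcyc⟩ := exists_euler k
  let e : ℕ → Equiv.Perm (Fin (k + 1)) := fun i => (f ^ i) 1
  have he : ∀ i, Ov (e i) (e (i + 1)) := by
    intro i
    have : e (i + 1) = f (e i) := by simp only [e, pow_succ']; rfl
    rw [this]
    exact hf _
  have hpos := Nat.factorial_pos (k + 1)
  have hcard : Fintype.card (Equiv.Perm (Fin (k + 1))) = (k + 1).factorial := by
    simp [Fintype.card_perm]
  have hon : f.IsCycleOn ((univ : Finset (Equiv.Perm (Fin (k + 1)))) : Set _) := by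
    refine ⟨by simp, fun x _ y _ => (hcyc x).symm.trans (hcyc y)⟩
  have hsurj : ∀ p, ∃ i, i < (k + 1).factorial ∧ e i = p := by
    intro p
    obtain ⟨i, hi, h⟩ := hon.exists_pow_eq (mem_univ 1) (mem_univ p)
    exact ⟨i, by rwa [card_univ, hcard] at hi, h⟩
  have hinje : ∀ i j, i < (k + 1).factorial → j < (k + 1).factorial → e i = e j → i = j := by
    have hb : Function.Bijective (fun i : Fin (k + 1).factorial => e i) := by
      rw [Fintype.bijective_iff_surjective_and_card]
      refine ⟨fun p => ?_, by rw [hcard, Fintype.card_fin]⟩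
      obtain ⟨i, hi, h⟩ := hsurj p
      exact ⟨⟨i, hi⟩, h⟩
    intro i j hi hj h
    simpa using @hb.1 ⟨i, hi⟩ ⟨j, hj⟩ h
  obtain ⟨s, hinj, hs⟩ := realize e he ((k + 1).factorial - 1)
  obtain ⟨σ, hσ⟩ := exists_pattern (fun j : Fin ((k + 1).factorial + k) => s j) (by
    intro a b hab
    exact Fin.ext (hinj a b (by omega) (by omega) hab))
  refine ⟨σ, fun p => ?_⟩
  have hpapp : ∀ i j, i < (k + 1).factorial + k → j < (k + 1).factorial + k →
      (papp σ i < papp σ j ↔ s i < s j) := by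
    intro i j hi hj
    simp only [papp, hi, hj, dif_pos]
    exact hσ ⟨i, hi⟩ ⟨j, hj⟩
  obtain ⟨i0, hi0, rfl⟩ := hsurj p
  unfold cocc
  rw [Finset.card_eq_one]
  refine ⟨i0, ?_⟩
  ext i
  simp only [mem_filter, mem_range, mem_singleton]
  constructor
  · rintro ⟨hi, h⟩
    have hi' : i < (k + 1).factorial := by omega
    refine hinje i i0 hi' hi0 (pattern_unique _ _ fun a b => ?_)
    rw [h, hs i (by omega), hpapp _ _ (by omega) (by omega)]
  · rintro rfl
    refine ⟨by omega, fun a b => ?_⟩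
    rw [hs i (by omega), hpapp _ _ (by omega) (by omega)]
end

section
/- The feasible region P_k for consecutive patterns equals the cycle polytope of the overlap graph Ov(k); in particular P_k is a polytope of dimension k! − (k−1)! whose vertices are indexed by the simple cycles of Ov(k). -/
open Filter Finset

/-- The feasible region `P_k` for consecutive patterns: the set of vectors
`v ∈ ℝ^{S_k}` for which there is a sequence of permutations whose sizes tend to
infinity and whose normalized consecutive-occurrence vectors tend to `v`. -/
def feasibleRegion (k : ℕ) : Set (Equiv.Perm (Fin k) → ℝ) :=
  { v | ∃ (N : ℕ → ℕ) (σ : ∀ m, Equiv.Perm (Fin (N m))),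
      Filter.Tendsto N Filter.atTop Filter.atTop ∧
      ∀ π : Equiv.Perm (Fin k),
        Filter.Tendsto (fun m => (cocc π (σ m) : ℝ) / (N m : ℝ)) Filter.atTop (nhds (v π)) }

/-- The pattern of a tuple of distinct values: the unique permutation in the same
relative order. -/
def patOf {j : ℕ} (f : Fin j → ℕ) : Equiv.Perm (Fin j) := (Tuple.sort f)⁻¹

/-- The pattern induced by the first `k` entries of a permutation of size `k+1`.
In the overlap graph `Ov(k+1)` this is the source of the edge labeled `π`. -/
def firstPat {k : ℕ} (π : Equiv.Perm (Fin (k + 1))) : Equiv.Perm (Fin k) :=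
  patOf (fun i => (π i.castSucc : ℕ))

/-- The pattern induced by the last `k` entries of a permutation of size `k+1`.
In the overlap graph `Ov(k+1)` this is the target of the edge labeled `π`. -/
def lastPat {k : ℕ} (π : Equiv.Perm (Fin (k + 1))) : Equiv.Perm (Fin k) :=
  patOf (fun i => (π i.succ : ℕ))

variable {V E : Type*}

/-- A (non-empty) closed directed walk in the directed multigraph with edge-source map `src`
and edge-target map `tgt`: a nonempty list of edges in which the target of each edge is the
source of the next, and the target of the last edge is the source of the first. -/
def IsCycleWalk (src tgt : E → V) (c : List E) : Prop :=
  c ≠ [] ∧ c.Chain' (fun a b => tgt a = src b) ∧ c.getLast?.map tgt = c.head?.map src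

/-- A simple cycle: a closed directed walk that does not repeat vertices. -/
def IsSimpleCycle (src tgt : E → V) (c : List E) : Prop :=
  IsCycleWalk src tgt c ∧ (c.map src).Nodup

/-- The normalized incidence vector `e_C` of a cycle `C`:
its coordinate at an edge `e` is (number of occurrences of `e` in `C`)/|C|. -/
noncomputable def cycleVec [DecidableEq E] (c : List E) : E → ℝ :=
  fun e => (c.count e : ℝ) / (c.length : ℝ)

/-- The cycle polytope of a directed multigraph: the convex hull of the normalized incidence
vectors of its simple cycles. -/
noncomputable def cyclePolytope [DecidableEq E] (src tgt : E → V) : Set (E → ℝ) :=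
  convexHull ℝ { x | ∃ c, IsSimpleCycle src tgt c ∧ x = cycleVec c }


set_option linter.unusedSectionVars false

section GraphPart
variable {V E : Type*}

/-- Walks from one vertex to another, as lists of edges. -/
inductive Wk (s t : E → V) : V → V → List E → Prop
  | nil (v : V) : Wk s t v v []
  | cons (e : E) (w : V) (l : List E) : Wk s t (t e) w l → Wk s t (s e) w (e :: l)

theorem Wk.append {s t : E → V} {u v w : V} {l m : List E} (h : Wk s t u v l)
    (h' : Wk s t v w m) : Wk s t u w (l ++ m) := by
  induction h with
  | nil v => simpa using h'
  | cons e w l _ ih => exact Wk.cons e _ _ (ih h')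

theorem Wk.single (s t : E → V) (e : E) : Wk s t (s e) (t e) [e] :=
  Wk.cons e _ _ (Wk.nil _)

/-- repetition of a list -/
def rep (l : List E) : ℕ → List E
  | 0 => []
  | n + 1 => l ++ rep l n

theorem Wk.rep {s t : E → V} {u : V} {l : List E} (h : Wk s t u u l) (n : ℕ) :
    Wk s t u u (rep l n) := by
  induction n with
  | zero => exact Wk.nil _
  | succ n ih => exact h.append ih

theorem rep_length (l : List E) (n : ℕ) : (rep l n).length = n * l.length := by
  induction n with
  | zero => simp [_root_.rep]
  | succ n ih => simp [_root_.rep, ih]; ring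

theorem rep_count [DecidableEq E] (l : List E) (n : ℕ) (e : E) :
    (rep l n).count e = n * l.count e := by
  induction n with
  | zero => simp [_root_.rep]
  | succ n ih => simp [_root_.rep, ih]; ring

theorem wk_of_chain {s t : E → V} (e : E) (l : List E)
    (h : (e :: l).IsChain (fun a b => t a = s b)) :
    Wk s t (s e) (t ((e :: l).getLast (by simp))) (e :: l) := by
  induction l generalizing e with
  | nil => exact Wk.single s t e
  | cons f l ih =>
    rw [List.isChain_cons_cons] at h
    have := ih f h.2
    rw [List.getLast_cons (by simp)]
    refine Wk.cons e _ _ ?_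
    rw [h.1]; exact this

theorem IsCycleWalk.wk {s t : E → V} {c : List E} (h : IsCycleWalk s t c) :
    ∃ v, Wk s t v v c := by
  obtain ⟨h0, h1, h2⟩ := h
  cases c with
  | nil => exact absurd rfl h0
  | cons e l =>
    refine ⟨s e, ?_⟩
    have := wk_of_chain e l h1
    rw [List.getLast?_eq_getLast_of_ne_nil (by simp)] at h2
    simp only [Option.map_some, List.head?_cons, Option.some.injEq] at h2
    rwa [h2] at this

theorem IsSimpleCycle.exists_fin {s t : E → V} {c : List E} (h : IsSimpleCycle s t c) :
    ∃ n, ∃ w : Fin (n + 1) → E, c = List.ofFn w ∧ (∀ i, t (w i) = s (w (i + 1))) ∧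
      Function.Injective (s ∘ w) := by
  obtain ⟨⟨h0, h1, h2⟩, h3⟩ := h
  obtain ⟨n, hn⟩ : ∃ n, c.length = n + 1 :=
    ⟨c.length - 1, by have := List.length_pos_of_ne_nil h0; omega⟩
  obtain ⟨w, rfl⟩ : ∃ w : Fin (n + 1) → E, c = List.ofFn w := by
    refine ⟨fun i => c.get (i.cast hn.symm), ?_⟩
    apply List.ext_getElem
    · simp [hn]
    · intro i h1 h2; rw [List.getElem_ofFn]; simp
  refine ⟨n, w, rfl, ?_, ?_⟩
  · intro i
    rw [List.Chain', List.isChain_iff_getElem] at h1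
    refine Fin.lastCases ?_ (fun j => ?_) i
    · rw [List.getLast?_eq_getLast_of_ne_nil h0, List.head?_eq_some_head h0] at h2
      simp only [Option.map_some, Option.some.injEq, List.getLast_ofFn, List.head_ofFn] at h2
      simp only [Fin.last_add_one]
      exact h2
    · have := h1 j (by simp)
      simp only [List.getElem_ofFn] at this
      rw [Fin.coeSucc_eq_succ]
      exact this
  · rw [List.map_ofFn, List.nodup_ofFn] at h3
    exact h3

theorem isSimpleCycle_ofFn {s t : E → V} {n : ℕ} (w : Fin (n + 1) → E)
    (h : ∀ i, t (w i) = s (w (i + 1))) (hi : Function.Injective (s ∘ w)) :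
    IsSimpleCycle s t (List.ofFn w) := by
  have h0 : List.ofFn w ≠ [] := by simp
  refine ⟨⟨h0, ?_, ?_⟩, ?_⟩
  · rw [List.Chain', List.isChain_iff_getElem]
    intro i hi
    simp only [List.length_ofFn] at hi
    simp only [List.getElem_ofFn]
    have := h (Fin.castSucc ⟨i, by omega⟩)
    rw [Fin.coeSucc_eq_succ] at this
    exact this
  · rw [List.getLast?_eq_getLast_of_ne_nil h0, List.head?_eq_some_head h0]
    simp only [Option.map_some, Option.some.injEq, List.getLast_ofFn, List.head_ofFn]
    have := h (Fin.last n)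
    simp only [Fin.last_add_one] at this
    exact this
  · rw [List.map_ofFn, List.nodup_ofFn]; exact hi

variable [Fintype E] [DecidableEq E] [Fintype V] [DecidableEq V]

/-- boundary map -/
noncomputable def bd (s t : E → V) : (E → ℝ) →ₗ[ℝ] (V → ℝ) :=
  Fintype.linearCombination ℝ (fun e => (Pi.single (s e) 1 - Pi.single (t e) 1 : V → ℝ))

theorem bd_apply (s t : E → V) (x : E → ℝ) (u : V) :
    bd s t x u = ∑ e, x e * ((if u = s e then 1 else 0) - (if u = t e then 1 else 0)) := by
  simp [bd, Fintype.linearCombination_apply, Pi.single_apply]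

theorem bd_single (s t : E → V) (e : E) :
    bd s t (Pi.single e 1) = Pi.single (s e) 1 - Pi.single (t e) 1 := by
  simp [bd, Fintype.linearCombination_apply_single]

theorem bd_sum (s t : E → V) (x : E → ℝ) : ∑ u, bd s t x u = 0 := by
  simp only [bd_apply]
  rw [Finset.sum_comm]
  apply Finset.sum_eq_zero
  intro e _
  rw [← Finset.mul_sum, Finset.sum_sub_distrib]
  simp

/-- total mass -/
noncomputable def tot : (E → ℝ) →ₗ[ℝ] ℝ := Fintype.linearCombination ℝ (fun _ => (1 : ℝ))

theorem tot_apply (x : E → ℝ) : tot x = ∑ e, x e := by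
  simp [tot, Fintype.linearCombination_apply]

/-- counting vector of a list -/
noncomputable def cv (l : List E) : E → ℝ := fun e => (l.count e : ℝ)

theorem cv_cons (e : E) (l : List E) : cv (e :: l) = Pi.single e 1 + cv l := by
  funext f
  simp only [cv, List.count_cons, Pi.add_apply, Pi.single_apply, beq_iff_eq]
  by_cases h : e = f
  · subst h; simp; ring
  · simp [h, Ne.symm h]

theorem tot_cv (l : List E) : tot (cv l) = l.length := by
  induction l with
  | nil => simp [tot_apply, cv]
  | cons e l ih => rw [cv_cons, map_add, ih, tot_apply]; simp; ring

theorem Wk.bd_cv {s t : E → V} {u v : V} {l : List E} (h : Wk s t u v l) :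
    bd s t (cv l) = Pi.single u 1 - Pi.single v 1 := by
  induction h with
  | nil v => 
    have : cv ([] : List E) = 0 := by funext e; simp [cv]
    simp [this]
  | cons e w l _ ih => rw [cv_cons, map_add, ih, bd_single]; abel

theorem cycleVec_eq (c : List E) : cycleVec c = (c.length : ℝ)⁻¹ • cv c := by
  funext e; simp [cycleVec, cv, div_eq_inv_mul]

/-- normalised nonnegative circulations -/
def circ (s t : E → V) : Set (E → ℝ) :=
  {x | (∀ e, 0 ≤ x e) ∧ tot x = 1 ∧ bd s t x = 0}

theorem circ_of_wk {s t : E → V} {u : V} {l : List E} (h : Wk s t u u l) (h0 : l ≠ []) :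
    cycleVec l ∈ circ s t := by
  have hl : (l.length : ℝ) ≠ 0 := by
    have := List.length_pos_of_ne_nil h0
    positivity
  refine ⟨fun e => by unfold cycleVec; positivity, ?_, ?_⟩
  · rw [cycleVec_eq, map_smul, tot_cv]; simp [hl]
  · rw [cycleVec_eq, map_smul, h.bd_cv]; simp

theorem simple_mem_circ {s t : E → V} {c : List E} (h : IsSimpleCycle s t c) :
    cycleVec c ∈ circ s t := by
  obtain ⟨v, hv⟩ := h.1.wk
  exact circ_of_wk hv h.1.1

theorem circ_convex (s t : E → V) : Convex ℝ (circ s t) := by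
  intro x hx y hy a b ha hb hab
  refine ⟨fun e => ?_, ?_, ?_⟩
  · have := hx.1 e
    have := hy.1 e
    simp only [Pi.add_apply, Pi.smul_apply, smul_eq_mul]; positivity
  · rw [map_add, map_smul, map_smul, hx.2.1, hy.2.1]; simpa using hab
  · rw [map_add, map_smul, map_smul, hx.2.2, hy.2.2]; simp

theorem circ_isClosed (s t : E → V) : IsClosed (circ s t) := by
  have h1 : IsClosed {x : E → ℝ | ∀ e, 0 ≤ x e} := by
    simp only [Set.ofPred_forall]
    exact isClosed_iInter fun e => isClosed_le continuous_const (continuous_apply e)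
  have h2 : IsClosed {x : E → ℝ | tot x = 1} :=
    isClosed_eq (LinearMap.continuous_of_finiteDimensional _) continuous_const
  have h3 : IsClosed {x : E → ℝ | bd s t x = 0} :=
    isClosed_eq (LinearMap.continuous_of_finiteDimensional _) continuous_const
  exact h1.inter (h2.inter h3)

theorem circ_isCompact (s t : E → V) : IsCompact (circ s t) := by
  refine (isCompact_Icc (a := (0 : E → ℝ)) (b := 1)).of_isClosed_subset (circ_isClosed s t) ?_
  intro x hx
  refine ⟨hx.1, fun e => ?_⟩
  have := hx.2.1
  rw [tot_apply] at this
  rw [Pi.one_apply, ← this]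
  exact Finset.single_le_sum (fun i _ => hx.1 i) (Finset.mem_univ e)

/-- A normalised circulation supported on a simple cycle is the cycle vector. -/
theorem circ_unique {s t : E → V} {c : List E} (h : IsSimpleCycle s t c) {y : E → ℝ}
    (hy : y ∈ circ s t) (hs : ∀ e, e ∉ c → y e = 0) : y = cycleVec c := by
  have hnd : c.Nodup := h.2.of_map
  obtain ⟨n, w, rfl, hw, hi⟩ := h.exists_fin
  have hwi : Function.Injective w := hi.of_comp
  have hsum : ∀ g : E → ℝ, (∀ e, y e = 0 → g e = 0) → ∑ e, g e = ∑ i, g (w i) := by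
    intro g hg
    symm
    apply Finset.sum_of_injOn w hwi.injOn (fun _ _ => Finset.mem_coe.2 (Finset.mem_univ _))
    · intro e _ he
      refine hg e (hs e ?_)
      rw [List.mem_ofFn']
      simpa using he
    · intros; rfl
  have hstep : ∀ i, y (w (i + 1)) = y (w i) := by
    intro i
    have hb := congrFun hy.2.2 (t (w i))
    rw [bd_apply, hsum _ (by intro e he; simp [he])] at hb
    have e1 : ∀ j, (t (w i) = s (w j)) ↔ i + 1 = j := by
      intro j; rw [hw i]; exact hi.eq_iff (a := i + 1) (b := j)
    have e2 : ∀ j, (t (w i) = t (w j)) ↔ i = j := by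
      intro j; rw [hw j, e1]; exact add_left_inj 1
    simp only [e1, e2, mul_sub, Finset.sum_sub_distrib] at hb
    simp at hb
    linarith
  have hconst : ∀ i, y (w i) = y (w 0) := by
    intro i
    induction i using Fin.induction with
    | zero => rfl
    | succ i ih => rw [← Fin.coeSucc_eq_succ, hstep, ih]
  have htot := hy.2.1
  rw [tot_apply, hsum _ (fun _ h => h)] at htot
  simp only [hconst] at htot
  simp at htot
  funext e
  simp only [cycleVec, List.length_ofFn]
  by_cases he : e ∈ List.ofFn w
  · rw [List.count_eq_one_of_mem hnd he]
    obtain ⟨i, rfl⟩ := (List.mem_ofFn' _ _).1 he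
    rw [hconst]; push_cast
    field_simp; linarith
  · rw [hs e he, List.count_eq_zero_of_not_mem he]; simp

theorem simple_extreme {s t : E → V} {c : List E} (h : IsSimpleCycle s t c) :
    cycleVec c ∈ (circ s t).extremePoints ℝ := by
  refine ⟨simple_mem_circ h, ?_⟩
  rintro y hy z hz ⟨a, b, ha, hb, hab, heq⟩
  refine circ_unique h hy fun e he => ?_
  have := congrFun heq e
  simp only [Pi.add_apply, Pi.smul_apply, smul_eq_mul, cycleVec,
    List.count_eq_zero_of_not_mem he] at this
  have h1 := hy.1 e
  have h2 := hz.1 e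
  simp at this
  have h3 : 0 ≤ b * z e := by positivity
  have h4 : 0 ≤ a * y e := by positivity
  have h5 : a * y e = 0 := by linarith
  simpa [ha.ne'] using h5

theorem exists_simple_in_support {s t : E → V} {x : E → ℝ} (hx : x ∈ circ s t) :
    ∃ c, IsSimpleCycle s t c ∧ ∀ e ∈ c, 0 < x e := by
  classical
  obtain ⟨e0, he0⟩ : ∃ e, 0 < x e := by
    by_contra! hcon
    have : tot x = 0 := by
      rw [tot_apply]; exact Finset.sum_eq_zero fun e _ => le_antisymm (hcon e) (hx.1 e)
    rw [hx.2.1] at this; exact one_ne_zero this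
  -- continuing
  have hnext : ∀ e, 0 < x e → ∃ f, s f = t e ∧ 0 < x f := by
    intro e he
    by_contra! hcon
    have hb := congrFun hx.2.2 (t e)
    rw [bd_apply] at hb
    have h1 : ∑ f, x f * ((if t e = s f then 1 else 0) - (if t e = t f then 1 else 0)) ≤
        ∑ f, (if f = e then - x e else 0) := by
      apply Finset.sum_le_sum
      intro f _
      by_cases hfe : f = e
      · subst hfe
        by_cases h2 : t f = s f
        · exact absurd (hcon f h2.symm) (not_le.2 he)
        · simp [h2]
      · have h0 := hx.1 f
        by_cases h2 : t e = s f
        · have := hcon f h2.symm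
          have : x f = 0 := le_antisymm this h0
          simp [this, hfe]
        · simp only [h2, hfe, if_false]
          split_ifs <;> simp [h0]
    rw [hb] at h1
    simp at h1
    linarith
  let P : V → Prop := fun v => ∃ e, s e = v ∧ 0 < x e
  let o : V → E := fun v => if h : P v then h.choose else e0
  have ho : ∀ v, P v → s (o v) = v ∧ 0 < x (o v) := by
    intro v hv
    simp only [o, dif_pos hv]; exact hv.choose_spec
  let φ : V → V := fun v => t (o v)
  have hφ : ∀ v, P v → P (φ v) := fun v hv => hnext _ (ho v hv).2
  have hit : ∀ n v, P v → P (φ^[n] v) := by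
    intro n
    induction n with
    | zero => intro v hv; exact hv
    | succ n ih => intro v hv; rw [Function.iterate_succ_apply]; exact ih _ (hφ v hv)
  obtain ⟨i, j, hij, heq⟩ := Finite.exists_ne_map_eq_of_infinite (fun n : ℕ => φ^[n] (s e0))
  have hper : ∃ p, P p ∧ p ∈ Function.periodicPts φ := by
    have key : ∀ i j : ℕ, i < j → φ^[i] (s e0) = φ^[j] (s e0) →
        ∃ p, P p ∧ p ∈ Function.periodicPts φ := by
      intro i j hij heq
      refine ⟨φ^[i] (s e0), hit i _ ⟨e0, rfl, he0⟩, Function.mk_mem_periodicPts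
        (n := j - i) (by omega) ?_⟩
      rw [Function.IsPeriodicPt, Function.IsFixedPt, ← Function.iterate_add_apply]
      rw [heq]; congr 2; omega
    rcases lt_or_gt_of_ne hij with h | h
    · exact key i j h heq
    · exact key j i h heq.symm
  obtain ⟨p, hP, hp⟩ := hper
  obtain ⟨n, hn⟩ : ∃ n, Function.minimalPeriod φ p = n + 1 :=
    ⟨_, (Nat.succ_pred_eq_of_pos (Function.minimalPeriod_pos_of_mem_periodicPts hp)).symm⟩
  refine ⟨List.ofFn (fun i : Fin (n + 1) => o (φ^[i] p)), isSimpleCycle_ofFn _ ?_ ?_, ?_⟩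
  · intro i
    rw [(ho _ (hit _ _ hP)).1]
    change φ (φ^[i] p) = _
    rw [← Function.iterate_succ_apply' φ]
    refine Fin.lastCases ?_ (fun j => ?_) i
    · simp only [Fin.val_last, Fin.last_add_one, Fin.val_zero, Function.iterate_zero, id]
      have := Function.iterate_minimalPeriod (f := φ) (x := p)
      rwa [hn] at this
    · rw [Fin.coeSucc_eq_succ]; simp
  · intro i j hij
    simp only [Function.comp] at hij
    rw [(ho _ (hit _ _ hP)).1, (ho _ (hit _ _ hP)).1] at hij
    have := Function.iterate_injOn_Iio_minimalPeriod (f := φ) (x := p)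
    rw [hn] at this
    exact Fin.ext (this i.2 j.2 hij)
  · intro e he
    obtain ⟨i, rfl⟩ := (List.mem_ofFn' _ _).1 he
    exact (ho _ (hit _ _ hP)).2

theorem extreme_simple {s t : E → V} {x : E → ℝ} (hx : x ∈ (circ s t).extremePoints ℝ) :
    ∃ c, IsSimpleCycle s t c ∧ x = cycleVec c := by
  obtain ⟨c, hc, hpos⟩ := exists_simple_in_support hx.1
  refine ⟨c, hc, ?_⟩
  obtain ⟨m, hm0, hm1, hm⟩ : ∃ m : ℝ, 0 < m ∧ m < 1 ∧ ∀ e ∈ c, m ≤ x e := by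
    have hne : c.toFinset.Nonempty := by
      rw [List.toFinset_nonempty_iff]; exact hc.1.1
    obtain ⟨e, he, hmin⟩ := Finset.exists_min_image c.toFinset x hne
    refine ⟨min (x e) (1/2), lt_min (hpos e (by simpa using he)) (by norm_num),
      lt_of_le_of_lt (min_le_right _ _) (by norm_num), fun f hf => ?_⟩
    exact (min_le_left _ _).trans (hmin f (by simpa using hf))
  have hcc := simple_mem_circ hc
  have hle1 : ∀ e, cycleVec c e ≤ 1 := by
    intro e
    unfold cycleVec
    apply div_le_one_of_le₀ _ (by positivity)
    exact_mod_cast List.count_le_length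
  have h1m : (0 : ℝ) < 1 - m := by linarith
  have hz : (1 - m)⁻¹ • (x - m • cycleVec c) ∈ circ s t := by
    refine ⟨fun e => ?_, ?_, ?_⟩
    · simp only [Pi.smul_apply, Pi.sub_apply, smul_eq_mul]
      refine mul_nonneg (by positivity) ?_
      by_cases he : e ∈ c
      · have := hm e he
        have := hle1 e
        nlinarith
      · have := hx.1.1 e
        simp [cycleVec, List.count_eq_zero_of_not_mem he, this]
    · rw [map_smul, map_sub, map_smul, hx.1.2.1, hcc.2.1]
      simp; field_simp
    · rw [map_smul, map_sub, map_smul, hx.1.2.2, hcc.2.2]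
      simp
  refine (hx.2 hcc hz ⟨m, 1 - m, hm0, h1m, by ring, ?_⟩).symm
  rw [smul_smul, mul_inv_cancel₀ h1m.ne']
  simp

theorem extreme_iff (s t : E → V) (x : E → ℝ) : x ∈ (circ s t).extremePoints ℝ ↔
    ∃ c, IsSimpleCycle s t c ∧ x = cycleVec c :=
  ⟨extreme_simple, by rintro ⟨c, hc, rfl⟩; exact simple_extreme hc⟩

theorem simple_finite (s t : E → V) :
    {x : E → ℝ | ∃ c, IsSimpleCycle s t c ∧ x = cycleVec c}.Finite := by
  have : {c : List E | c.Nodup}.Finite :=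
    Set.finite_coe_iff.1 (inferInstanceAs (Finite {l : List E // l.Nodup}))
  refine (this.image cycleVec).subset ?_
  rintro x ⟨c, hc, rfl⟩
  exact ⟨c, hc.2.of_map, rfl⟩

theorem cyclePolytope_eq_circ (s t : E → V) : cyclePolytope s t = circ s t := by
  have h := closure_convexHull_extremePoints (circ_isCompact s t) (circ_convex s t)
  have h2 : (circ s t).extremePoints ℝ = {x | ∃ c, IsSimpleCycle s t c ∧ x = cycleVec c} :=
    Set.ext (extreme_iff s t)
  rw [h2, ((simple_finite s t).isCompact_convexHull ℝ).isClosed.closure_eq] at h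
  exact h

end GraphPart

set_option linter.unusedSectionVars false

section ConnPart
variable {V E : Type*} [Fintype E] [DecidableEq E] [Fintype V] [DecidableEq V]

theorem exists_pos_circ {s t : E → V} [Nonempty E] (hc : ∀ u v, ∃ l, Wk s t u v l) :
    ∃ x ∈ circ s t, ∀ e, 0 < x e := by
  choose L hL using fun e => hc (t e) (s e)
  have hW : ∀ e, Wk s t (s e) (s e) (e :: L e) := fun e => Wk.cons e _ _ (hL e)
  set x : E → ℝ := ∑ e, cv (e :: L e) with hx
  have hpos : ∀ e, 0 < x e := by
    intro e
    rw [hx, Finset.sum_apply]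
    refine Finset.sum_pos' (fun f _ => by unfold cv; positivity) ⟨e, Finset.mem_univ e, ?_⟩
    simp only [cv, List.count_cons_self]; positivity
  have htot : 0 < tot x := by
    rw [tot_apply]; exact Finset.sum_pos (fun e _ => hpos e) Finset.univ_nonempty
  have hbd : bd s t x = 0 := by
    rw [hx, map_sum]
    exact Finset.sum_eq_zero fun e _ => by rw [(hW e).bd_cv, sub_self]
  refine ⟨(tot x)⁻¹ • x, ⟨fun e => ?_, ?_, ?_⟩, fun e => ?_⟩
  · have := hpos e
    simp only [Pi.smul_apply, smul_eq_mul]; positivity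
  · rw [map_smul, smul_eq_mul, inv_mul_cancel₀ htot.ne']
  · rw [map_smul, hbd, smul_zero]
  · have := hpos e
    simp only [Pi.smul_apply, smul_eq_mul]; positivity

/-- auxiliary map whose kernel is the direction of the circulation polytope -/
noncomputable def bdt (s t : E → V) : (E → ℝ) →ₗ[ℝ] (V → ℝ) :=
  bd s t + (tot (E := E)).smulRight (1 : V → ℝ)

theorem bdt_apply (s t : E → V) (x : E → ℝ) : bdt s t x = bd s t x + tot x • (1 : V → ℝ) := by
  simp [bdt]

theorem bdt_ker [Nonempty V] (s t : E → V) (x : E → ℝ) :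
    bdt s t x = 0 ↔ tot x = 0 ∧ bd s t x = 0 := by
  rw [bdt_apply]
  constructor
  · intro h
    have h1 : ∑ u, (bd s t x + tot x • (1 : V → ℝ)) u = 0 := by rw [h]; simp
    simp only [Pi.add_apply, Finset.sum_add_distrib, bd_sum] at h1
    simp at h1
    refine ⟨h1, ?_⟩
    simpa [h1] using h
  · rintro ⟨h1, h2⟩; simp [h1, h2]

theorem bdt_surj {s t : E → V} [Nonempty E] (hc : ∀ u v, ∃ l, Wk s t u v l) :
    Function.Surjective (bdt s t) := by
  obtain ⟨x0, hx0, -⟩ := exists_pos_circ hc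
  rw [← LinearMap.range_eq_top]
  by_contra hne
  obtain ⟨f, hf0, hf⟩ := Submodule.exists_le_ker_of_lt_top _ (lt_top_iff_ne_top.2 hne)
  have hf' : ∀ x, f (bdt s t x) = 0 := fun x => hf (LinearMap.mem_range_self _ x)
  have h1 : f 1 = 0 := by
    have := hf' x0
    rwa [bdt_apply, hx0.2.1, hx0.2.2, zero_add, one_smul] at this
  have h2 : ∀ e, f (Pi.single (s e) 1) = f (Pi.single (t e) 1) := by
    intro e
    have := hf' (Pi.single e 1)
    rw [bdt_apply, map_add, map_smul, h1, bd_single, map_sub] at this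
    simp at this
    linarith
  have h3 : ∀ u v l, Wk s t u v l → f (Pi.single u 1) = f (Pi.single v 1) := by
    intro u v l h
    induction h with
    | nil v => rfl
    | cons e w l _ ih => rw [h2, ih]
  have h4 : ∀ u v, f (Pi.single u 1) = f (Pi.single v 1) := by
    intro u v
    obtain ⟨l, hl⟩ := hc u v
    exact h3 u v l hl
  have e0 : E := Classical.arbitrary E
  have h5 : (1 : V → ℝ) = ∑ v, Pi.single v 1 := by
    funext u; simp [Finset.sum_apply, Pi.single_apply]
  have h6 : f (Pi.single (s e0) 1) = 0 := by
    rw [h5, map_sum, Finset.sum_congr rfl (fun v _ => h4 v (s e0))] at h1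
    simp at h1
    rcases h1 with h | h
    · have : Nonempty V := ⟨s e0⟩
      exact absurd h Fintype.card_ne_zero
    · exact h
  apply hf0
  apply LinearMap.pi_ext'
  intro v
  ext
  simp [h4 v (s e0), h6]

theorem vectorSpan_circ {s t : E → V} [Nonempty E] (hc : ∀ u v, ∃ l, Wk s t u v l) :
    vectorSpan ℝ (circ s t) = LinearMap.ker (bdt s t) := by
  obtain ⟨x0, hx0, hpos⟩ := exists_pos_circ hc
  have : Nonempty V := ⟨s (Classical.arbitrary E)⟩
  apply le_antisymm
  · rw [vectorSpan_def, Submodule.span_le]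
    rintro _ ⟨x, hx, y, hy, rfl⟩
    simp only [vsub_eq_sub, SetLike.mem_coe, LinearMap.mem_ker]
    rw [bdt_ker, map_sub, map_sub, hx.2.1, hy.2.1, hx.2.2, hy.2.2]
    simp
  · intro x hx
    rw [LinearMap.mem_ker, bdt_ker] at hx
    obtain ⟨ε, hε, hle⟩ : ∃ ε : ℝ, 0 < ε ∧ ∀ e, 0 ≤ x0 e + ε * x e := by
      have : ∀ᶠ ε in nhdsWithin (0 : ℝ) (Set.Ioi 0), ∀ e, 0 ≤ x0 e + ε * x e := by
        rw [Filter.eventually_all]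
        intro e
        have hcont : Tendsto (fun ε : ℝ => x0 e + ε * x e) (nhds 0) (nhds (x0 e + 0 * x e)) :=
          (Continuous.tendsto (by fun_prop) 0)
        rw [zero_mul, add_zero] at hcont
        exact ((hcont.eventually (lt_mem_nhds (hpos e))).filter_mono
          nhdsWithin_le_nhds).mono fun _ h => h.le
      obtain ⟨ε, h1, h2⟩ := (this.and self_mem_nhdsWithin).exists
      exact ⟨ε, h2, h1⟩
    have hmem : x0 + ε • x ∈ circ s t := by
      refine ⟨fun e => by simpa using hle e, ?_, ?_⟩
      · rw [map_add, map_smul, hx.1, hx0.2.1]; simp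
      · rw [map_add, map_smul, hx.2, hx0.2.2]; simp
    have := vsub_mem_vectorSpan ℝ hmem hx0
    simp only [vsub_eq_sub, add_sub_cancel_left] at this
    exact (Submodule.smul_mem_iff _ hε.ne').1 this

theorem finrank_circ {s t : E → V} [Nonempty E] (hc : ∀ u v, ∃ l, Wk s t u v l) :
    Module.finrank ℝ (vectorSpan ℝ (circ s t)) = Fintype.card E - Fintype.card V := by
  rw [vectorSpan_circ hc]
  have h := LinearMap.finrank_range_add_finrank_ker (bdt s t)
  rw [LinearMap.range_eq_top.2 (bdt_surj hc), finrank_top] at h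
  simp at h
  omega

/-- normalised counting vectors of closed walks at a base point -/
def closedVecs (s t : E → V) (v0 : V) : Set (E → ℝ) :=
  {x | ∃ l, Wk s t v0 v0 l ∧ l ≠ [] ∧ x = cycleVec l}

theorem closedVecs_comb {s t : E → V} {v0 : V} {x y : E → ℝ} (hx : x ∈ closedVecs s t v0)
    (hy : y ∈ closedVecs s t v0) (p q : ℕ) (h : 0 < p + q) :
    ((p : ℝ) / (p + q)) • x + ((q : ℝ) / (p + q)) • y ∈ closedVecs s t v0 := by
  obtain ⟨l, hl, hl0, rfl⟩ := hx
  obtain ⟨m, hm, hm0, rfl⟩ := hy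
  have h1 := List.length_pos_of_ne_nil hl0
  have h2 := List.length_pos_of_ne_nil hm0
  refine ⟨rep l (p * m.length) ++ rep m (q * l.length), (hl.rep _).append (hm.rep _), ?_, ?_⟩
  · apply List.ne_nil_of_length_pos
    rw [List.length_append, rep_length, rep_length]
    have : 0 < (p + q) * (m.length * l.length) := by positivity
    nlinarith
  · funext e
    simp only [cycleVec, Pi.add_apply, Pi.smul_apply, smul_eq_mul, List.count_append,
      List.length_append, rep_length, rep_count]
    have h1' : (0 : ℝ) < l.length := by exact_mod_cast h1
    have h2' : (0 : ℝ) < m.length := by exact_mod_cast h2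
    have h' : (0 : ℝ) < p + q := by exact_mod_cast h
    push_cast
    have h3 : (0 : ℝ) < p * m.length * l.length + q * l.length * m.length := by
      have : (0 : ℝ) < (p + q) * (m.length * l.length) := by positivity
      nlinarith
    field_simp

theorem closedVecs_closure_convex (s t : E → V) (v0 : V) :
    Convex ℝ (closure (closedVecs s t v0)) := by
  intro x hx y hy a b ha hb hab
  rw [← closure_closure]
  refine map_mem_closure₂ (f := fun x y : E → ℝ => a • x + b • y) (by fun_prop) hx hy ?_
  intro x hx y hy
  have hb' : b = 1 - a := by linarith
  have ht := tendsto_nat_floor_mul_div_atTop (R := ℝ) ha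
  have ht' := ht.comp tendsto_natCast_atTop_atTop
  have hlim : Tendsto (fun n : ℕ => ((⌊a * n⌋₊ : ℝ) / n) • x + (1 - (⌊a * n⌋₊ : ℝ) / n) • y)
      atTop (nhds (a • x + b • y)) := by
    rw [hb']
    exact (ht'.smul_const x).add ((tendsto_const_nhds.sub ht').smul_const y)
  refine mem_closure_of_tendsto hlim ?_
  filter_upwards [eventually_gt_atTop 0] with n hn
  have hle : ⌊a * n⌋₊ ≤ n := by
    apply Nat.floor_le_of_le
    have : (0 : ℝ) ≤ n := by positivity
    nlinarith
  have := closedVecs_comb hx hy (⌊a * n⌋₊) (n - ⌊a * n⌋₊) (by omega)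
  rw [Nat.cast_sub hle] at this
  have hn' : (n : ℝ) ≠ 0 := by positivity
  rw [add_sub_cancel, sub_div, div_self hn'] at this
  exact this

theorem circ_subset_closure {s t : E → V} (hc : ∀ u v, ∃ l, Wk s t u v l) (v0 : V) :
    circ s t ⊆ closure (closedVecs s t v0) := by
  rw [← cyclePolytope_eq_circ]
  refine convexHull_min ?_ (closedVecs_closure_convex s t v0)
  rintro _ ⟨c, hcyc, rfl⟩
  obtain ⟨v, hv⟩ := hcyc.1.wk
  obtain ⟨P, hP⟩ := hc v0 v
  obtain ⟨Q, hQ⟩ := hc v v0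
  have hlen := List.length_pos_of_ne_nil hcyc.1.1
  have hlim : Tendsto (fun m : ℕ => cycleVec ((P ++ rep c m) ++ Q)) atTop (nhds (cycleVec c)) := by
    rw [tendsto_pi_nhds]
    intro e
    have := tendsto_add_mul_div_add_mul_atTop_nhds ((P.count e : ℝ) + Q.count e)
      ((P.length : ℝ) + Q.length) (c.count e : ℝ) (d := (c.length : ℝ)) (by positivity)
    refine this.congr fun m => ?_
    simp only [cycleVec, List.count_append, List.length_append, rep_length, rep_count]
    push_cast
    congr 1 <;> ring
  refine mem_closure_of_tendsto hlim ?_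
  filter_upwards [eventually_gt_atTop 0] with m hm
  refine ⟨_, (hP.append (hv.rep m)).append hQ, ?_, rfl⟩
  apply List.ne_nil_of_length_pos
  simp only [List.length_append, rep_length]
  have : 0 < m * c.length := by positivity
  omega

end ConnPart


section PermPart
variable {α : Type*} [LinearOrder α]

/-- same relative order -/
def OrdP {j : ℕ} (π : Equiv.Perm (Fin j)) (g : Fin j → α) : Prop :=
  ∀ a b, π a < π b ↔ g a < g b

/-- the rank permutation of a tuple -/
def rk {j : ℕ} (g : Fin j → α) : Equiv.Perm (Fin j) := (Tuple.sort g)⁻¹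

theorem rk_ord {j : ℕ} {g : Fin j → α} (hg : Function.Injective g) : OrdP (rk g) g := by
  have h : StrictMono (g ∘ Tuple.sort g) :=
    (Tuple.monotone_sort g).strictMono_of_injective (hg.comp (Tuple.sort g).injective)
  intro a b
  rw [← h.lt_iff_lt]
  simp [rk]

theorem OrdP.unique {j : ℕ} {π ρ : Equiv.Perm (Fin j)} {g : Fin j → α} (h1 : OrdP π g)
    (h2 : OrdP ρ g) : π = ρ := by
  have : StrictMono (π * ρ⁻¹ : Equiv.Perm (Fin j)) := by
    intro a b hab
    rw [Equiv.Perm.mul_apply, Equiv.Perm.mul_apply, h1, ← h2]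
    simpa using hab
  have h := (Equiv.Perm.monotone_iff _).1 this.monotone
  exact mul_inv_eq_one.1 h

theorem perm_ord {j : ℕ} (π : Equiv.Perm (Fin j)) : OrdP π (fun i => (π i : ℕ)) :=
  fun _ _ => Iff.rfl

theorem OrdP.first {k : ℕ} {π : Equiv.Perm (Fin (k + 1))} {g : Fin (k + 1) → α}
    (h : OrdP π g) : OrdP (firstPat π) (fun i => g i.castSucc) := by
  have h1 : OrdP (firstPat π) (fun i : Fin k => (π i.castSucc : ℕ)) := by
    apply rk_ord
    intro a b hab
    exact Fin.castSucc_injective _ (π.injective (Fin.ext hab))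
  intro a b
  rw [h1, ← h]; rfl

theorem OrdP.last {k : ℕ} {π : Equiv.Perm (Fin (k + 1))} {g : Fin (k + 1) → α}
    (h : OrdP π g) : OrdP (lastPat π) (fun i => g i.succ) := by
  have h1 : OrdP (lastPat π) (fun i : Fin k => (π i.succ : ℕ)) := by
    apply rk_ord
    intro a b hab
    exact Fin.succ_injective _ (π.injective (Fin.ext hab))
  intro a b
  rw [h1, ← h]; rfl

/-- pattern of the window of length `j` starting at `i` -/
def win (j : ℕ) (f : ℕ → α) (i : ℕ) : Equiv.Perm (Fin j) := rk (fun a : Fin j => f (i + a))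

theorem win_ord {j : ℕ} {f : ℕ → α} {i n : ℕ} (hf : Set.InjOn f (Set.Iio n)) (h : i + j ≤ n) :
    OrdP (win j f i) (fun a : Fin j => f (i + a)) := by
  apply rk_ord
  intro a b hab
  have := hf (Set.mem_Iio.2 (by omega)) (Set.mem_Iio.2 (by omega)) hab
  exact Fin.ext (by omega)

theorem win_first {k : ℕ} {f : ℕ → α} {i n : ℕ} (hf : Set.InjOn f (Set.Iio n))
    (h : i + k + 1 ≤ n) : firstPat (win (k + 1) f i) = win k f i := by
  have h1 := (win_ord (j := k + 1) (i := i) hf (by omega)).first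
  exact h1.unique (win_ord (j := k) (i := i) hf (by omega))

theorem win_last {k : ℕ} {f : ℕ → α} {i n : ℕ} (hf : Set.InjOn f (Set.Iio n))
    (h : i + k + 1 ≤ n) : lastPat (win (k + 1) f i) = win k f (i + 1) := by
  have h1 := (win_ord (j := k + 1) (i := i) hf (by omega)).last
  have h2 := win_ord (j := k) (i := i + 1) hf (by omega)
  refine h1.unique ?_
  convert h2 using 3 with a
  simp only [Fin.val_succ]; ring

/-- list of window patterns -/
def winL (k : ℕ) (f : ℕ → α) : ℕ → ℕ → List (Equiv.Perm (Fin (k + 1)))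
  | _, 0 => []
  | i, m + 1 => win (k + 1) f i :: winL k f (i + 1) m

theorem winL_length (k : ℕ) (f : ℕ → α) (i m : ℕ) : (winL k f i m).length = m := by
  induction m generalizing i with
  | zero => rfl
  | succ m ih => simp [winL, ih]

theorem winL_wk {k : ℕ} {f : ℕ → α} {n : ℕ} (hf : Set.InjOn f (Set.Iio n)) (i m : ℕ)
    (h : i + m + k ≤ n) :
    Wk (firstPat (k := k)) lastPat (win k f i) (win k f (i + m)) (winL k f i m) := by
  induction m generalizing i with
  | zero => exact Wk.nil _
  | succ m ih =>
    rw [← win_first hf (by omega), winL]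
    refine Wk.cons _ _ _ ?_
    rw [win_last hf (by omega)]
    have := ih (i + 1) (by omega)
    rwa [show i + 1 + m = i + (m + 1) by ring] at this

theorem winL_count (k : ℕ) (f : ℕ → α) (i m : ℕ) (π : Equiv.Perm (Fin (k + 1))) :
    (winL k f i m).count π = ((range m).filter (fun a => win (k + 1) f (i + a) = π)).card := by
  rw [Finset.card_filter]
  induction m generalizing i with
  | zero => simp [winL]
  | succ m ih =>
    rw [Finset.sum_range_succ', winL, List.count_cons, ih]
    simp only [beq_iff_eq, add_zero]
    congr 1
    apply Finset.sum_congr rfl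
    intro a _
    rw [show i + 1 + a = i + (a + 1) by ring]

theorem winL_shift (k : ℕ) (f : ℕ → α) (i m : ℕ) :
    winL k f (i + 1) m = winL k (fun j => f (j + 1)) i m := by
  induction m generalizing i with
  | zero => rfl
  | succ m ih =>
    rw [winL, winL, ih]
    congr 1
    unfold win
    congr 1
    funext a
    congr 1
    ring

theorem papp_of_lt {n : ℕ} (σ : Equiv.Perm (Fin n)) {i : ℕ} (h : i < n) :
    papp σ i = σ ⟨i, h⟩ := by simp [papp, h]

theorem papp_injOn {n : ℕ} (σ : Equiv.Perm (Fin n)) : Set.InjOn (papp σ) (Set.Iio n) := by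
  intro i hi j hj h
  rw [papp_of_lt σ hi, papp_of_lt σ hj] at h
  exact congrArg Fin.val (σ.injective (Fin.ext h))

theorem cocc_eq {k n : ℕ} (π : Equiv.Perm (Fin (k + 1))) (σ : Equiv.Perm (Fin n)) :
    cocc π σ = (winL k (papp σ) 0 (n - k)).count π := by
  rw [winL_count, cocc]
  rw [show n + 1 - (k + 1) = n - k by omega]
  congr 1
  apply Finset.filter_congr
  intro i hi
  rw [Finset.mem_range] at hi
  have h := win_ord (j := k + 1) (i := i) (papp_injOn σ) (by omega)
  rw [zero_add]
  constructor
  · intro h'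
    exact h.unique h'
  · rintro rfl
    exact h

theorem conn (k : ℕ) (u v : Equiv.Perm (Fin k)) :
    ∃ l, Wk (firstPat (k := k)) lastPat u v l := by
  let f : ℕ → ℕ := fun i => if h : i < k then u ⟨i, h⟩ else
    if h : i - k < k then k + v ⟨i - k, h⟩ else i
  have hf : Set.InjOn f (Set.Iio (k + k)) := by
    intro i hi j hj hij
    rw [Set.mem_Iio] at hi hj
    simp only [f] at hij
    split_ifs at hij with h1 h2 h3 h4 h5 h6 h7
    · have := u.injective (Fin.ext hij); simpa using this
    · omega
    · omega
    · omega
    · have h : (v ⟨i - k, by assumption⟩ : ℕ) = v ⟨j - k, by assumption⟩ := by omega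
      have := v.injective (Fin.ext h)
      simp at this; omega
    all_goals omega
  have h := winL_wk (k := k) hf 0 k (by omega)
  have h1 : win k f 0 = u := by
    refine (win_ord hf (by omega)).unique ?_
    intro a b
    simp [f]
  have h2 : win k f (0 + k) = v := by
    refine (win_ord hf (by omega)).unique ?_
    intro a b
    simp [f]
  rw [h1, h2] at h
  exact ⟨_, h⟩

theorem exists_between_avoid (L U : Finset ℚ) (h : ∀ x ∈ L, ∀ y ∈ U, x < y) (X : Finset ℚ) :
    ∃ y, y ∉ X ∧ (∀ x ∈ L, x < y) ∧ ∀ x ∈ U, y < x := by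
  obtain ⟨a, ha1, ha2⟩ := Order.exists_between_finsets L U h
  obtain ⟨b, hb1, hb2⟩ := Order.exists_between_finsets (insert a L) U (by
    intro x hx y hy
    rcases Finset.mem_insert.1 hx with rfl | hx
    · exact ha2 y hy
    · exact h x hx y hy)
  have hab : a < b := hb1 a (Finset.mem_insert_self _ _)
  obtain ⟨y, hy, hyX⟩ := (Set.Ioo_infinite hab).exists_notMem_finset X
  exact ⟨y, hyX, fun x hx => (ha1 x hx).trans hy.1, fun x hx => hy.2.trans (hb2 x hx)⟩

theorem exists_real {k : ℕ} {u v : Equiv.Perm (Fin k)} {l : List (Equiv.Perm (Fin (k + 1)))}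
    (h : Wk (firstPat (k := k)) lastPat u v l) :
    ∃ f : ℕ → ℚ, Set.InjOn f (Set.Iio (l.length + k)) ∧ win k f 0 = u ∧
      winL k f 0 l.length = l := by
  induction h with
  | nil v =>
    let f : ℕ → ℚ := fun i => if h : i < k then ((v ⟨i, h⟩ : ℕ) : ℚ) else 0
    have hf : Set.InjOn f (Set.Iio (0 + k)) := by
      intro i hi j hj hij
      rw [Set.mem_Iio, zero_add] at hi hj
      simp only [f, hi, hj, dif_pos] at hij
      have := v.injective (Fin.ext (by exact_mod_cast hij))
      simpa using this
    refine ⟨f, hf, ?_, rfl⟩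
    refine (win_ord hf (by omega)).unique ?_
    intro a b
    simp [f]
  | cons e w l _ ih =>
    obtain ⟨f, hf, hu, hl⟩ := ih
    have ho : OrdP (lastPat e) (fun a : Fin k => f a) := by
      rw [← hu]
      simpa using win_ord (j := k) (i := 0) hf (by omega)
    have ho' : ∀ a b : Fin k, e a.succ < e b.succ ↔ f a < f b := by
      intro a b
      rw [← ho]
      exact ((perm_ord e).last a b).symm
    obtain ⟨y, hyX, hyL, hyU⟩ := exists_between_avoid
      ((univ.filter (fun a : Fin k => e a.succ < e 0)).image (fun a : Fin k => f a))
      ((univ.filter (fun a : Fin k => e 0 < e a.succ)).image (fun a : Fin k => f a)) (by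
        intro x hx y hy
        simp only [Finset.mem_image, Finset.mem_filter, Finset.mem_univ, true_and] at hx hy
        obtain ⟨a, ha, rfl⟩ := hx
        obtain ⟨b, hb, rfl⟩ := hy
        exact (ho' a b).1 (ha.trans hb))
      ((range (l.length + k)).image f)
    have hL : ∀ a : Fin k, e a.succ < e 0 → f a < y := fun a ha =>
      hyL _ (Finset.mem_image.2 ⟨a, by simpa using ha, rfl⟩)
    have hU : ∀ a : Fin k, e 0 < e a.succ → y < f a := fun a ha =>
      hyU _ (Finset.mem_image.2 ⟨a, by simpa using ha, rfl⟩)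
    have hX : ∀ i < l.length + k, f i ≠ y := fun i hi heq =>
      hyX (Finset.mem_image.2 ⟨i, by simpa using hi, heq⟩)
    have hne : ∀ a : Fin k, e a.succ ≠ e 0 := fun a h => Fin.succ_ne_zero a (e.injective h)
    let f' : ℕ → ℚ := fun i => Nat.casesOn i y f
    have hf'0 : f' 0 = y := rfl
    have hf's : ∀ i, f' (i + 1) = f i := fun i => rfl
    have hf' : Set.InjOn f' (Set.Iio ((e :: l).length + k)) := by
      intro i hi j hj hij
      simp only [Set.mem_Iio, List.length_cons] at hi hj
      cases i with
      | zero =>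
        cases j with
        | zero => rfl
        | succ j => exact absurd hij.symm (hX j (by omega))
      | succ i =>
        cases j with
        | zero => exact absurd hij (hX i (by omega))
        | succ j =>
          rw [hf (Set.mem_Iio.2 (by omega)) (Set.mem_Iio.2 (by omega)) hij]
    have he : OrdP e (fun a : Fin (k + 1) => f' a) := by
      intro a b
      refine Fin.cases ?_ (fun a => ?_) a
      · refine Fin.cases ?_ (fun b => ?_) b
        · simp
        · simp only [Fin.val_zero, Fin.val_succ, hf'0, hf's]
          refine ⟨hU b, fun hlt => ?_⟩
          by_contra hcon
          exact absurd (hL b (lt_of_le_of_ne (not_lt.1 hcon) (hne b))) hlt.not_gt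
      · refine Fin.cases ?_ (fun b => ?_) b
        · simp only [Fin.val_zero, Fin.val_succ, hf'0, hf's]
          refine ⟨hL a, fun hlt => ?_⟩
          by_contra hcon
          exact absurd (hU a (lt_of_le_of_ne (not_lt.1 hcon) (hne a).symm)) hlt.not_gt
        · simp only [Fin.val_succ, hf's]
          exact ho' a b
    have hwin : win (k + 1) f' 0 = e := by
      refine (win_ord hf' (by simp)).unique ?_
      simpa using he
    refine ⟨f', hf', ?_, ?_⟩
    · rw [← hwin, win_first hf' (by simp)]
    · rw [List.length_cons, winL, hwin, winL_shift]
      congr 1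

theorem exists_perm {k : ℕ} {u v : Equiv.Perm (Fin k)} {l : List (Equiv.Perm (Fin (k + 1)))}
    (h : Wk (firstPat (k := k)) lastPat u v l) :
    ∃ σ : Equiv.Perm (Fin (l.length + k)), ∀ π : Equiv.Perm (Fin (k + 1)),
      cocc π σ = l.count π := by
  obtain ⟨f, hf, -, hl⟩ := exists_real h
  set n := l.length + k with hn
  have hinj : Function.Injective (fun a : Fin n => f a) := by
    intro a b hab
    exact Fin.ext (hf a.2 b.2 hab)
  refine ⟨rk (fun a : Fin n => f a), fun π => ?_⟩
  have ho := rk_ord hinj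
  have hw : ∀ m i, i + m + k ≤ n →
      winL k (papp (rk (fun a : Fin n => f a))) i m = winL k f i m := by
    intro m
    induction m with
    | zero => intro i _; rfl
    | succ m ih =>
      intro i hi
      rw [winL, winL, ih _ (by omega)]
      congr 1
      refine OrdP.unique (win_ord (papp_injOn _) (by omega)) ?_
      intro a b
      rw [win_ord (n := n) hf (by omega) a b]
      have ha : i + (a : ℕ) < n := by omega
      have hb : i + (b : ℕ) < n := by omega
      simp only [papp_of_lt _ ha, papp_of_lt _ hb]
      exact (ho ⟨_, ha⟩ ⟨_, hb⟩).symm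
  rw [cocc_eq, hw _ _ (by omega), show n - k = l.length by omega, hl]

theorem feasible_subset (k : ℕ) :
    feasibleRegion (k + 1) ⊆ circ (firstPat (k := k)) lastPat := by
  rintro v ⟨N, σ, hN, hv⟩
  set x : ℕ → Equiv.Perm (Fin (k + 1)) → ℝ := fun m π => (cocc π (σ m) : ℝ) / (N m : ℝ) with hx
  have hlim : Tendsto x atTop (nhds v) := tendsto_pi_nhds.2 hv
  have hNr : Tendsto (fun m => (N m : ℝ)) atTop atTop := tendsto_natCast_atTop_atTop.comp hN
  have hxe : ∀ m, x m = (N m : ℝ)⁻¹ • cv (winL k (papp (σ m)) 0 (N m - k)) := by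
    intro m
    funext π
    simp [hx, cv, cocc_eq, div_eq_inv_mul]
  refine ⟨fun π => ge_of_tendsto' (hv π) fun m => by positivity, ?_, ?_⟩
  · have h1 : Tendsto (fun m => tot (x m)) atTop (nhds (tot v)) :=
      ((LinearMap.continuous_of_finiteDimensional _).tendsto v).comp hlim
    have h2 : Tendsto (fun m => tot (x m)) atTop (nhds 1) := by
      have : Tendsto (fun m => 1 - (k : ℝ) / N m) atTop (nhds (1 - 0)) :=
        tendsto_const_nhds.sub (tendsto_const_nhds.div_atTop hNr)
      rw [sub_zero] at this
      refine this.congr' ?_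
      filter_upwards [hN.eventually_ge_atTop (k + 1)] with m hm
      rw [hxe, map_smul, tot_cv, winL_length, Nat.cast_sub (by omega), smul_eq_mul]
      have : (N m : ℝ) ≠ 0 := by
        have : 0 < N m := by omega
        positivity
      field_simp
    exact tendsto_nhds_unique h1 h2
  · funext u
    have h1 : Tendsto (fun m => bd firstPat lastPat (x m) u) atTop
        (nhds (bd firstPat lastPat v u)) :=
      ((continuous_apply u).comp (LinearMap.continuous_of_finiteDimensional
        (bd (firstPat (k := k)) lastPat))).tendsto v |>.comp hlim
    have h2 : Tendsto (fun m => bd firstPat lastPat (x m) u) atTop (nhds 0) := by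
      refine squeeze_zero_norm' (a := fun m => (2 : ℝ) / N m) ?_
        (tendsto_const_nhds.div_atTop hNr)
      filter_upwards [hN.eventually_ge_atTop (k + 1)] with m hm
      have hw := winL_wk (k := k) (papp_injOn (σ m)) 0 (N m - k) (by omega)
      rw [hxe, map_smul, hw.bd_cv, Pi.smul_apply, norm_smul, div_eq_inv_mul, norm_inv,
        Real.norm_natCast]
      refine mul_le_mul_of_nonneg_left ?_ (by positivity)
      refine (norm_sub_le _ _).trans ?_
      have : ∀ w : Equiv.Perm (Fin k), ‖(Pi.single w 1 : Equiv.Perm (Fin k) → ℝ) u‖ ≤ 1 := by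
        intro w
        rw [Pi.single_apply]; split_ifs <;> simp
      linarith [this (win k (papp (σ m)) 0), this (win k (papp (σ m)) (0 + (N m - k)))]
    exact tendsto_nhds_unique h1 h2

theorem closure_subset_feasible (k : ℕ) (v0 : Equiv.Perm (Fin k)) :
    closure (closedVecs (firstPat (k := k)) lastPat v0) ⊆ feasibleRegion (k + 1) := by
  intro x hx
  obtain ⟨y, hy, hlim⟩ := mem_closure_iff_seq_limit.1 hx
  choose l hl hl0 hly using hy
  choose σ hσ using fun j => exists_perm ((hl j).rep (j + 1))
  refine ⟨fun j => (rep (l j) (j + 1)).length + k, σ, ?_, ?_⟩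
  · refine tendsto_atTop_mono (fun j => ?_) tendsto_id
    have := List.length_pos_of_ne_nil (hl0 j)
    rw [rep_length, id]
    nlinarith
  · intro π
    have hN : Tendsto (fun j => (rep (l j) (j + 1)).length + k) atTop atTop := by
      refine tendsto_atTop_mono (fun j => ?_) tendsto_id
      have := List.length_pos_of_ne_nil (hl0 j)
      rw [rep_length, id]
      nlinarith
    have hNr : Tendsto (fun j => (((rep (l j) (j + 1)).length + k : ℕ) : ℝ)) atTop atTop :=
      tendsto_natCast_atTop_atTop.comp hN
    have h1 : Tendsto (fun j => y j π * (1 - (k : ℝ) / ((rep (l j) (j + 1)).length + k : ℕ)))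
        atTop (nhds (x π * (1 - 0))) :=
      ((tendsto_pi_nhds.1 hlim) π).mul
        (tendsto_const_nhds.sub (tendsto_const_nhds.div_atTop hNr))
    rw [sub_zero, mul_one] at h1
    refine h1.congr fun j => ?_
    have hp := List.length_pos_of_ne_nil (hl0 j)
    have hp' : (0 : ℝ) < (l j).length := by exact_mod_cast hp
    simp only [hσ, rep_count, hly, rep_length, cycleVec]
    push_cast
    have : ((j : ℝ) + 1) * (l j).length + k ≠ 0 := by positivity
    field_simp
    ring

theorem feasible_eq_circ (k : ℕ) :
    feasibleRegion (k + 1) = circ (firstPat (k := k)) lastPat :=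
  Set.Subset.antisymm (feasible_subset k)
    ((circ_subset_closure (conn k) 1).trans (closure_subset_feasible k 1))

end PermPart

/-- The feasible region `P_{k+1}` for consecutive patterns equals the cycle polytope of the
overlap graph `Ov(k+1)` (whose edges are identified with `S_{k+1}`, the edge `π` going from
`firstPat π` to `lastPat π`); in particular it is a polytope of dimension
`(k+1)! − k!` whose vertices are exactly the normalized incidence vectors of the simple
cycles of `Ov(k+1)`. -/
theorem feasibleRegion_eq_cyclePolytope (k : ℕ) :
    feasibleRegion (k + 1) = cyclePolytope (firstPat (k := k)) lastPat ∧
    Module.finrank ℝ (vectorSpan ℝ (feasibleRegion (k + 1)))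
      = Nat.factorial (k + 1) - Nat.factorial k ∧
    ∀ x : Equiv.Perm (Fin (k + 1)) → ℝ,
      x ∈ Set.extremePoints ℝ (feasibleRegion (k + 1)) ↔
        ∃ c, IsSimpleCycle (firstPat (k := k)) lastPat c ∧ x = cycleVec c := by
  rw [feasible_eq_circ]
  refine ⟨(cyclePolytope_eq_circ _ _).symm, ?_, fun x => extreme_iff _ _ x⟩
  rw [finrank_circ (conn k), Fintype.card_perm, Fintype.card_perm, Fintype.card_fin,
    Fintype.card_fin]
end
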